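/- Let X_1, …, X_n be upper extended negatively dependent random variables in a sub-linear expectation space with dominating constant K ≥ 1 and 𝔼[X_k] ≤ 0 for each k. Set S_n = Σ_{k=1}^n X_k and B_n = Σ_{k=1}^n 𝔼[X_k²]. Then for any p ≥ 2 there is a constant C_p (depending only on p and K) such that C_𝕍[(S_n⁺)^p] ≤ p^p·C_𝕍[(max_{k≤n} X_k⁺)^p] + C_p·B_n^{p/2} ≤ p^p·Σ_{k=1}^n C_𝕍[(X_k⁺)^p] + C_p·B_n^{p/2}. -/

import Mathlib

open Filter MeasureTheory
open scoped ENNReal NNReal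

noncomputable section

/-- A sub-linear expectation on `Ω`: a monotone, constant-preserving, sub-additive,
positively homogeneous functional on real random variables (with values in the
extended reals, so that random variables without a finite expectation are allowed). -/
structure SublinearExp (Ω : Type) where
  E : (Ω → ℝ) → EReal
  mono : ∀ X Y : Ω → ℝ, (∀ ω, X ω ≤ Y ω) → E X ≤ E Y
  const_eq : ∀ c : ℝ, E (fun _ => c) = (c : EReal)
  subadd : ∀ X Y : Ω → ℝ, E (fun ω => X ω + Y ω) ≤ E X + E Y
  pos_homog : ∀ lam : ℝ, 0 ≤ lam → ∀ X : Ω → ℝ,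
    E (fun ω => lam * X ω) = (lam : EReal) * E X

namespace SublinearExp

variable {Ω : Type}

/-- The conjugate expectation `ℰ[X] := −𝔼[−X]`. -/
def cE (SL : SublinearExp Ω) (X : Ω → ℝ) : EReal := - SL.E fun ω => - X ω

/-- The upper capacity `𝕍(A) := inf{𝔼[ξ] : 1_A ≤ ξ}`. -/
def V (SL : SublinearExp Ω) (A : Set Ω) : ℝ :=
  sInf {x : ℝ | ∃ ξ : Ω → ℝ,
    (∀ ω, A.indicator (fun _ => (1 : ℝ)) ω ≤ ξ ω) ∧ SL.E ξ = (x : EReal)}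

/-- The lower capacity `𝓋(A) := 1 − 𝕍(Aᶜ)`. -/
def vLow (SL : SublinearExp Ω) (A : Set Ω) : ℝ := 1 - SL.V Aᶜ

/-- The Choquet integral `C_𝕍(X) := ∫₀^∞ 𝕍(X ≥ t) dt` (of a non-negative r.v.). -/
def Choquet (SL : SublinearExp Ω) (X : Ω → ℝ) : ℝ≥0∞ :=
  ∫⁻ t in Set.Ioi (0 : ℝ), ENNReal.ofReal (SL.V {ω | t ≤ X ω})

/-- The outer capacity `𝕍*(A) := inf{Σ_n 𝕍(A_n) : A ⊆ ∪_n A_n}`. -/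
def Vout (SL : SublinearExp Ω) (A : Set Ω) : ℝ≥0∞ :=
  ⨅ (B : ℕ → Set Ω) (_ : A ⊆ ⋃ n, B n), ∑' n, ENNReal.ofReal (SL.V (B n))

/-- The upper capacity is continuous: continuous from below and from above. -/
def ContinuousCapacity (SL : SublinearExp Ω) : Prop :=
  (∀ A : ℕ → Set Ω, Monotone A →
    Tendsto (fun n => SL.V (A n)) atTop (nhds (SL.V (⋃ n, A n)))) ∧
  (∀ A : ℕ → Set Ω, Antitone A →
    Tendsto (fun n => SL.V (A n)) atTop (nhds (SL.V (⋂ n, A n))))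

/-- Bounded Lipschitz function on ℝ. -/
def IsBLip (g : ℝ → ℝ) : Prop :=
  (∃ L : NNReal, LipschitzWith L g) ∧ ∃ M : ℝ, ∀ x, |g x| ≤ M

/-- Local Lipschitz function on ℝ: `|φ(x) − φ(y)| ≤ C(1+|x|^m+|y|^m)|x−y|`. -/
def IsLocLip (φ : ℝ → ℝ) : Prop :=
  ∃ (C : ℝ) (m : ℕ), ∀ x y : ℝ, |φ x - φ y| ≤ C * (1 + |x| ^ m + |y| ^ m) * |x - y|

/-- Upper extended negative dependence (finite family) with dominating constant `K`:
`𝔼[∏ g_i(X_i)] ≤ K ∏ 𝔼[g_i(X_i)]` for all non-negative bounded Lipschitz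
non-decreasing `g_i`.  (Expectations of bounded functions are finite, whence
the `toReal`.) -/
def UENDFin (SL : SublinearExp Ω) (K : ℝ) {n : ℕ} (X : Fin n → Ω → ℝ) : Prop :=
  ∀ g : Fin n → ℝ → ℝ, (∀ i, IsBLip (g i)) → (∀ i, Monotone (g i)) →
    (∀ i x, 0 ≤ g i x) →
    SL.E (fun ω => ∏ i, g i (X i ω)) ≤
      ((K * ∏ i, (SL.E fun ω => g i (X i ω)).toReal : ℝ) : EReal)

/-- Upper extended negative dependence for a sequence. -/
def UEND (SL : SublinearExp Ω) (K : ℝ) (X : ℕ → Ω → ℝ) : Prop :=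
  ∀ n : ℕ, ∀ g : ℕ → ℝ → ℝ, (∀ i, IsBLip (g i)) → (∀ i, Monotone (g i)) →
    (∀ i x, 0 ≤ g i x) →
    SL.E (fun ω => ∏ i ∈ Finset.range n, g i (X i ω)) ≤
      ((K * ∏ i ∈ Finset.range n, (SL.E fun ω => g i (X i ω)).toReal : ℝ) : EReal)

/-- Lower extended negative dependence for a sequence. -/
def LEND (SL : SublinearExp Ω) (K : ℝ) (X : ℕ → Ω → ℝ) : Prop :=
  ∀ n : ℕ, ∀ g : ℕ → ℝ → ℝ, (∀ i, IsBLip (g i)) → (∀ i, Antitone (g i)) →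
    (∀ i x, 0 ≤ g i x) →
    SL.E (fun ω => ∏ i ∈ Finset.range n, g i (X i ω)) ≤
      ((K * ∏ i ∈ Finset.range n, (SL.E fun ω => g i (X i ω)).toReal : ℝ) : EReal)

/-- Extended negative dependence = upper and lower END. -/
def END (SL : SublinearExp Ω) (K : ℝ) (X : ℕ → Ω → ℝ) : Prop :=
  UEND SL K X ∧ LEND SL K X

/-- Upper extended negative dependence under the conjugate expectation `ℰ`
(finite family). -/
def UENDFinConj (SL : SublinearExp Ω) (K : ℝ) {n : ℕ} (X : Fin n → Ω → ℝ) : Prop :=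
  ∀ g : Fin n → ℝ → ℝ, (∀ i, IsBLip (g i)) → (∀ i, Monotone (g i)) →
    (∀ i x, 0 ≤ g i x) →
    SL.cE (fun ω => ∏ i, g i (X i ω)) ≤
      ((K * ∏ i, (SL.cE fun ω => g i (X i ω)).toReal : ℝ) : EReal)

/-- Upper extended negative dependence under the conjugate expectation (sequence). -/
def UENDconj (SL : SublinearExp Ω) (K : ℝ) (X : ℕ → Ω → ℝ) : Prop :=
  ∀ n : ℕ, ∀ g : ℕ → ℝ → ℝ, (∀ i, IsBLip (g i)) → (∀ i, Monotone (g i)) →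
    (∀ i x, 0 ≤ g i x) →
    SL.cE (fun ω => ∏ i ∈ Finset.range n, g i (X i ω)) ≤
      ((K * ∏ i ∈ Finset.range n, (SL.cE fun ω => g i (X i ω)).toReal : ℝ) : EReal)

/-- Lower extended negative dependence under the conjugate expectation (sequence). -/
def LENDconj (SL : SublinearExp Ω) (K : ℝ) (X : ℕ → Ω → ℝ) : Prop :=
  ∀ n : ℕ, ∀ g : ℕ → ℝ → ℝ, (∀ i, IsBLip (g i)) → (∀ i, Antitone (g i)) →
    (∀ i x, 0 ≤ g i x) →
    SL.cE (fun ω => ∏ i ∈ Finset.range n, g i (X i ω)) ≤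
      ((K * ∏ i ∈ Finset.range n, (SL.cE fun ω => g i (X i ω)).toReal : ℝ) : EReal)

/-- Extended negative dependence under the conjugate expectation. -/
def ENDconj (SL : SublinearExp Ω) (K : ℝ) (X : ℕ → Ω → ℝ) : Prop :=
  UENDconj SL K X ∧ LENDconj SL K X

/-- Extended independence of a sequence:
`𝔼[∏ ψ_i(X_i)] = ∏ 𝔼[ψ_i(X_i)]` for non-negative local Lipschitz `ψ_i`,
whenever the expectations involved are finite. -/
def ExtIndep (SL : SublinearExp Ω) (X : ℕ → Ω → ℝ) : Prop :=
  ∀ n : ℕ, ∀ ψ : ℕ → ℝ → ℝ, (∀ i, IsLocLip (ψ i)) → (∀ i x, 0 ≤ ψ i x) →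
    (∀ i ∈ Finset.range n, SL.E (fun ω => ψ i (X i ω)) ≠ ⊤) →
    SL.E (fun ω => ∏ i ∈ Finset.range n, ψ i (X i ω)) =
      ((∏ i ∈ Finset.range n, (SL.E fun ω => ψ i (X i ω)).toReal : ℝ) : EReal)

/-- Extended independence of two random variables. -/
def ExtIndepPair (SL : SublinearExp Ω) (Y Z : Ω → ℝ) : Prop :=
  ∀ ψ₁ ψ₂ : ℝ → ℝ, IsLocLip ψ₁ → IsLocLip ψ₂ →
    (∀ x, 0 ≤ ψ₁ x) → (∀ x, 0 ≤ ψ₂ x) →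
    SL.E (fun ω => ψ₁ (Y ω)) ≠ ⊤ → SL.E (fun ω => ψ₂ (Z ω)) ≠ ⊤ →
    SL.E (fun ω => ψ₁ (Y ω) * ψ₂ (Z ω)) =
      (((SL.E fun ω => ψ₁ (Y ω)).toReal * (SL.E fun ω => ψ₂ (Z ω)).toReal : ℝ) : EReal)

/-- Identically distributed: `𝔼[φ(X_i)] = 𝔼[φ(X_1)]` for all local Lipschitz `φ`. -/
def IdentDist (SL : SublinearExp Ω) (X : ℕ → Ω → ℝ) : Prop :=
  ∀ (i : ℕ) (φ : ℝ → ℝ), IsLocLip φ →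
    SL.E (fun ω => φ (X i ω)) = SL.E fun ω => φ (X 0 ω)

end SublinearExp

/-- `log x = ln(x ∨ e)`. -/
def paperLog (x : ℝ) : ℝ := Real.log (max x (Real.exp 1))

/-- `a_n = √(2 n log log n)` with the above convention for `log`. -/
def lilA (n : ℕ) : ℝ := Real.sqrt (2 * n * paperLog (paperLog n))

/-!
Truncate every summand at a level `y`. A quadratic bound for the exponential on `(-∞, y]`, together
with negative dependence and Markov's inequality, bounds the capacity of `x ≤ ∑ k, min (X k) y` by
`K * exp (-(h * x) + c * B)`, where `c` is Bennett's coefficient, and the best choice of `h` turns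
this into the Fuk–Nagaev bound `K * (e * B / (x * y + B)) ^ (x / y)`. Off that event,
`x ≤ ∑ k, X k` forces some `X k` to be at least `y`. With `y = x / r` the Fuk–Nagaev bound is of
order `(B / x ^ 2) ^ r`, which is integrable at infinity with respect to `d(x ^ p)` as soon as
`r > p / 2`, while the event that some `X k` is at least `x / r` contributes `r ^ p` times the
Choquet integral of the `p`-th power of the maximum. The theorem is the case `r = p`.
-/

lemma exp_le_one_add_add_sq_div_two {u : ℝ} (hu : u ≤ 0) : Real.exp u ≤ 1 + u + u ^ 2 / 2 := by
  have h_pos : 0 < 1 + -u + (-u) ^ 2 / 2 := by nlinarith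
  calc Real.exp u = (Real.exp (-u))⁻¹ := by rw [Real.exp_neg, inv_inv]
    _ ≤ (1 + -u + (-u) ^ 2 / 2)⁻¹ := by
      gcongr
      exact Real.quadratic_le_exp_of_nonneg (neg_nonneg.mpr hu)
    _ ≤ 1 + u + u ^ 2 / 2 := by
      rw [inv_le_iff_one_le_mul₀ h_pos]
      nlinarith [sq_nonneg (u ^ 2)]

lemma hasSum_exp_sub_one_sub (u : ℝ) :
    HasSum (fun n : ℕ => u ^ (n + 2) / (n + 2).factorial) (Real.exp u - 1 - u) := by
  have h_exp : HasSum (fun n : ℕ => u ^ n / n.factorial) (Real.exp u) := by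
    simpa only [Real.exp_eq_exp_ℝ] using NormedSpace.expSeries_div_hasSum_exp u
  simpa [Finset.sum_range_succ, sub_sub] using (hasSum_nat_add_iff' 2).mpr h_exp

lemma exp_sub_one_sub_le_sq_mul_div {u v : ℝ} (hv : 0 < v) (huv : u ≤ v) :
    Real.exp u - 1 - u ≤ u ^ 2 * ((Real.exp v - 1 - v) / v ^ 2) := by
  rcases le_total u 0 with hu | hu
  · have h_half : 1 / 2 ≤ (Real.exp v - 1 - v) / v ^ 2 := by
      rw [le_div_iff₀ (by positivity)]
      linarith [Real.quadratic_le_exp_of_nonneg hv.le]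
    nlinarith [exp_le_one_add_add_sq_div_two hu, sq_nonneg u]
  · rw [← mul_div_assoc, le_div_iff₀ (by positivity), mul_comm]
    refine hasSum_le (fun n => ?_) ((hasSum_exp_sub_one_sub u).mul_left _)
      ((hasSum_exp_sub_one_sub v).mul_left _)
    calc v ^ 2 * (u ^ (n + 2) / (n + 2).factorial)
        = v ^ 2 * u ^ 2 / (n + 2).factorial * u ^ n := by ring
      _ ≤ v ^ 2 * u ^ 2 / (n + 2).factorial * v ^ n := by gcongr
      _ = u ^ 2 * (v ^ (n + 2) / (n + 2).factorial) := by ring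

/-- Bennett's coefficient: the least `c` with `exp (h * x) ≤ 1 + h * x + c * x ^ 2` for all `x ≤ y`,
so the quadratic coefficient in the exponential bound for variables truncated at `y`. -/
def bennettCoeff (h y : ℝ) : ℝ := (Real.exp (h * y) - 1 - h * y) / y ^ 2

lemma bennettCoeff_nonneg (h y : ℝ) : 0 ≤ bennettCoeff h y :=
  div_nonneg (by linarith [Real.add_one_le_exp (h * y)]) (sq_nonneg y)

lemma exp_mul_min_le {h y : ℝ} (hh : 0 < h) (hy : 0 < y) (x : ℝ) :
    Real.exp (h * min x y) ≤ 1 + (h * x + bennettCoeff h y * x ^ 2) := by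
  have h_sq : min x y ^ 2 ≤ x ^ 2 := by
    rcases min_cases x y with ⟨h_min, -⟩ | ⟨h_min, hyx⟩ <;> rw [h_min]
    gcongr
  have h_lin : h * min x y ≤ h * x := by gcongr; exact min_le_left x y
  have h_quad : Real.exp (h * min x y) - 1 - h * min x y ≤ bennettCoeff h y * x ^ 2 :=
    calc Real.exp (h * min x y) - 1 - h * min x y
        ≤ (h * min x y) ^ 2 * ((Real.exp (h * y) - 1 - h * y) / (h * y) ^ 2) :=
          exp_sub_one_sub_le_sq_mul_div (by positivity) (by gcongr; exact min_le_right x y)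
      _ = bennettCoeff h y * min x y ^ 2 := by unfold bennettCoeff; field_simp
      _ ≤ bennettCoeff h y * x ^ 2 :=
          mul_le_mul_of_nonneg_left h_sq (bennettCoeff_nonneg h y)
  linarith

lemma exists_exp_neg_mul_add_bennettCoeff_mul_le {x y B : ℝ} (hx : 0 < x) (hy : 0 < y)
    (hB : 0 < B) :
    ∃ h > 0, Real.exp (-(h * x) + bennettCoeff h y * B) ≤
      (Real.exp 1 * B / (x * y + B)) ^ (x / y) := by
  set L : ℝ := Real.log ((x * y + B) / B)
  have h_ratio : 1 < (x * y + B) / B := by rw [one_lt_div hB]; linarith [mul_pos hx hy]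
  have hL : 0 < L := Real.log_pos h_ratio
  have h_exp_L : Real.exp L = (x * y + B) / B := Real.exp_log (one_pos.trans h_ratio)
  -- `L / y` is the minimiser over `h` of the exponent `-(h * x) + bennettCoeff h y * B`.
  refine ⟨L / y, div_pos hL hy, ?_⟩
  have h_bennett : bennettCoeff (L / y) y * B = x / y - L * B / y ^ 2 := by
    rw [bennettCoeff, div_mul_cancel₀ L hy.ne', h_exp_L]
    field_simp
    ring
  have h_exponent : -(L / y * x) + bennettCoeff (L / y) y * B ≤ (1 - L) * (x / y) := by
    have h_drop : 0 ≤ L * B / y ^ 2 := by positivity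
    rw [h_bennett, div_mul_eq_mul_div, mul_div_assoc]
    linarith
  calc Real.exp (-(L / y * x) + bennettCoeff (L / y) y * B)
      ≤ Real.exp (1 - L) ^ (x / y) := by
        rw [← Real.exp_mul]
        exact Real.exp_le_exp.mpr h_exponent
    _ = (Real.exp 1 * B / (x * y + B)) ^ (x / y) := by
        rw [Real.exp_sub, h_exp_L, div_div_eq_mul_div]

lemma exists_real_eq_and_sum_le {ι : Type*} [Fintype ι] {f : ι → EReal} {B : ℝ}
    (hf : ∀ i, 0 ≤ f i) (hB : ∑ i, f i ≤ B) :
    ∃ b : ι → ℝ, (∀ i, f i = b i) ∧ ∑ i, b i ≤ B := by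
  have h_le (i : ι) : f i ≤ B :=
    (Finset.single_le_sum (fun j _ => hf j) (Finset.mem_univ i)).trans hB
  have h_coe (i : ι) : f i = (f i).toReal :=
    (EReal.coe_toReal (ne_top_of_le_ne_top (EReal.coe_ne_top B) (h_le i))
      (ne_bot_of_le_ne_bot EReal.zero_ne_bot (hf i))).symm
  have h_sum : ((∑ i, (f i).toReal : ℝ) : EReal) = ∑ i, f i := by
    rw [Finset.sum_congr rfl fun i _ => h_coe i]
    exact map_sum (⟨⟨Real.toEReal, EReal.coe_zero⟩, EReal.coe_add⟩ : ℝ →+ EReal) _ _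
  exact ⟨fun i => (f i).toReal, h_coe, EReal.coe_le_coe_iff.mp (h_sum.trans_le hB)⟩

lemma lipschitzOnWith_exp_Iic (a : ℝ) :
    LipschitzOnWith (Real.exp a).toNNReal Real.exp (Set.Iic a) := by
  refine (convex_Iic a).lipschitzOnWith_of_nnnorm_deriv_le
    (fun _ _ => Real.differentiableAt_exp) fun u hu => ?_
  rw [Real.deriv_exp, ← NNReal.coe_le_coe, coe_nnnorm, Real.norm_of_nonneg (Real.exp_pos u).le,
    Real.coe_toNNReal _ (Real.exp_pos a).le]
  exact Real.exp_le_exp.mpr hu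

lemma le_max_zero_rpow_iff {t p : ℝ} (ht : 0 < t) (hp : 0 < p) (a : ℝ) :
    t ≤ max a 0 ^ p ↔ t ^ p⁻¹ ≤ a := by
  rw [← Real.rpow_inv_le_iff_of_pos ht.le (le_max_right a 0) hp, le_max_iff,
    or_iff_left (Real.rpow_pos_of_pos ht _).not_ge]

lemma lintegral_Ioi_div_rpow {b q : ℝ} (hb : 0 < b) (hq : 1 < q) :
    ∫⁻ t in Set.Ioi b, ENNReal.ofReal ((b / t) ^ q) = ENNReal.ofReal (b / (q - 1)) := by
  have h_integrable : IntegrableOn (fun t : ℝ => b ^ q * t ^ (-q)) (Set.Ioi b) :=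
    (integrableOn_Ioi_rpow_of_lt (by linarith) hb).const_mul _
  have h_nonneg : 0 ≤ᵐ[volume.restrict (Set.Ioi b)] fun t : ℝ => b ^ q * t ^ (-q) := by
    filter_upwards [ae_restrict_mem measurableSet_Ioi] with t ht
    have ht0 : 0 < t := hb.trans ht
    positivity
  have h_value : b ^ q * (-b ^ (-q + 1) / (-q + 1)) = b / (q - 1) := by
    have hq' : -q + 1 ≠ 0 := by linarith
    have hq'' : q - 1 ≠ 0 := by linarith
    rw [Real.rpow_add hb, Real.rpow_neg hb.le, Real.rpow_one]
    field_simp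
    ring
  calc ∫⁻ t in Set.Ioi b, ENNReal.ofReal ((b / t) ^ q)
      = ∫⁻ t in Set.Ioi b, ENNReal.ofReal (b ^ q * t ^ (-q)) := by
        refine setLIntegral_congr_fun measurableSet_Ioi fun t ht => ?_
        have ht0 : 0 < t := hb.trans ht
        rw [Real.div_rpow hb.le ht0.le, Real.rpow_neg ht0.le, div_eq_mul_inv]
    _ = ENNReal.ofReal (b / (q - 1)) := by
        rw [← ofReal_integral_eq_lintegral_ofReal h_integrable h_nonneg, integral_const_mul,
          integral_Ioi_rpow_of_lt (by linarith) hb, h_value]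

lemma lintegral_min_one_mul_div_rpow_le {b c q : ℝ} (hb : 0 ≤ b) (hc : 0 ≤ c) (hq : 1 < q) :
    ∫⁻ t in Set.Ioi (0 : ℝ), ENNReal.ofReal (min 1 (c * (b / t) ^ q)) ≤
      ENNReal.ofReal ((1 + c / (q - 1)) * b) := by
  rcases hb.eq_or_lt with rfl | hb
  · simp [Real.zero_rpow (by linarith : q ≠ 0)]
  rw [← Set.Ioc_union_Ioi_eq_Ioi hb.le]
  calc ∫⁻ t in Set.Ioc 0 b ∪ Set.Ioi b, ENNReal.ofReal (min 1 (c * (b / t) ^ q))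
      ≤ (∫⁻ t in Set.Ioc 0 b, ENNReal.ofReal (min 1 (c * (b / t) ^ q))) +
          ∫⁻ t in Set.Ioi b, ENNReal.ofReal (min 1 (c * (b / t) ^ q)) := lintegral_union_le _ _ _
    _ ≤ (∫⁻ _ in Set.Ioc 0 b, ENNReal.ofReal 1) +
          ∫⁻ t in Set.Ioi b, ENNReal.ofReal (c * (b / t) ^ q) := by
        gcongr
        · exact min_le_left _ _
        · exact min_le_right _ _
    _ = ENNReal.ofReal b + ENNReal.ofReal c * ENNReal.ofReal (b / (q - 1)) := by
        simp_rw [ENNReal.ofReal_mul hc]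
        rw [lintegral_const_mul' _ _ ENNReal.ofReal_ne_top, lintegral_Ioi_div_rpow hb hq]
        simp
    _ = ENNReal.ofReal ((1 + c / (q - 1)) * b) := by
        rw [← ENNReal.ofReal_mul hc, ← ENNReal.ofReal_add hb.le (by positivity)]
        ring_nf

lemma lintegral_Ioi_eq_ofReal_mul_lintegral_comp_mul_left {a : ℝ} (ha : 0 < a) (f : ℝ → ℝ≥0∞) :
    ∫⁻ t in Set.Ioi (0 : ℝ), f t =
      ENNReal.ofReal a * ∫⁻ t in Set.Ioi (0 : ℝ), f (a * t) := by
  have h_deriv (t : ℝ) (_ : t ∈ Set.Ioi 0) :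
      HasDerivWithinAt (fun t => a * t) a (Set.Ioi 0) t :=
    (hasDerivAt_const_mul a).hasDerivWithinAt
  have h_image := lintegral_image_eq_lintegral_abs_deriv_mul measurableSet_Ioi h_deriv
    (mul_right_injective₀ ha.ne').injOn f
  rwa [Set.image_mul_left_Ioi ha, mul_zero, abs_of_pos ha,
    lintegral_const_mul' _ _ ENNReal.ofReal_ne_top] at h_image

namespace SublinearExp

variable {Ω : Type}

lemma isBLip_exp_mul_min {h : ℝ} (hh : 0 ≤ h) (y : ℝ) :
    IsBLip fun x => Real.exp (h * min x y) := by
  have h_le (x : ℝ) : h * min x y ≤ h * y := mul_le_mul_of_nonneg_left (min_le_right x y) hh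
  have h_inner : LipschitzWith (‖h‖₊ * 1) fun x : ℝ => h * min x y :=
    (lipschitzWith_smul h).comp (LipschitzWith.id.min_const y)
  refine ⟨⟨_, lipschitzOnWith_univ.mp
    ((lipschitzOnWith_exp_Iic (h * y)).comp h_inner.lipschitzOnWith fun x _ => h_le x)⟩,
    Real.exp (h * y), fun x => ?_⟩
  rw [Real.abs_exp]
  exact Real.exp_le_exp.mpr (h_le x)

section Expectation

variable (SL : SublinearExp Ω)

lemma E_ne_bot (X : Ω → ℝ) : SL.E X ≠ ⊥ := by
  intro hX
  have h_zero : SL.E (fun _ => 0) ≤ ⊥ := by simpa [hX] using SL.subadd X fun ω => -X ω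
  rw [SL.const_eq] at h_zero
  exact EReal.coe_ne_bot 0 (le_bot_iff.mp h_zero)

lemma coe_toReal_E {X : Ω → ℝ} (hX : SL.E X ≠ ⊤) : ((SL.E X).toReal : EReal) = SL.E X :=
  EReal.coe_toReal hX (SL.E_ne_bot X)

lemma E_nonneg {X : Ω → ℝ} (hX : ∀ ω, 0 ≤ X ω) : 0 ≤ SL.E X := by
  simpa [SL.const_eq] using SL.mono (fun _ => 0) X hX

lemma nonneg_of_sum_E_sq_le {ι : Type*} [Fintype ι] {X : ι → Ω → ℝ} {B : ℝ}
    (hB : ∑ k, SL.E (fun ω => X k ω ^ 2) ≤ B) : 0 ≤ B :=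
  EReal.coe_nonneg.mp
    ((Finset.sum_nonneg fun k _ => SL.E_nonneg fun ω => sq_nonneg (X k ω)).trans hB)

end Expectation

section Capacity

variable (SL : SublinearExp Ω)

lemma zero_mem_lowerBounds_V (A : Set Ω) :
    0 ∈ lowerBounds {x : ℝ | ∃ ξ : Ω → ℝ,
      (∀ ω, A.indicator (fun _ => (1 : ℝ)) ω ≤ ξ ω) ∧ SL.E ξ = (x : EReal)} := by
  rintro x ⟨ξ, hξ, hx⟩
  rw [← EReal.coe_nonneg, ← hx]
  exact SL.E_nonneg fun ω => (Set.indicator_nonneg (fun _ _ => zero_le_one) ω).trans (hξ ω)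

lemma V_nonneg (A : Set Ω) : 0 ≤ SL.V A := Real.sInf_nonneg (SL.zero_mem_lowerBounds_V A)

lemma V_le_of_E_le {A : Set Ω} {ξ : Ω → ℝ} {x : ℝ} (hξ : ∀ ω, 0 ≤ ξ ω) (hA : ∀ ω ∈ A, 1 ≤ ξ ω)
    (hx : SL.E ξ ≤ x) : SL.V A ≤ x := by
  have h_coe := SL.coe_toReal_E (ne_top_of_le_ne_top (EReal.coe_ne_top x) hx)
  rw [← h_coe, EReal.coe_le_coe_iff] at hx
  exact (csInf_le ⟨0, SL.zero_mem_lowerBounds_V A⟩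
    ⟨ξ, fun ω => Set.indicator_apply_le' (hA ω) fun _ => hξ ω, h_coe.symm⟩).trans hx

lemma exists_E_lt_of_V_lt {A : Set Ω} {x : ℝ} (hx : SL.V A < x) :
    ∃ ξ : Ω → ℝ, (∀ ω, 0 ≤ ξ ω) ∧ (∀ ω ∈ A, 1 ≤ ξ ω) ∧ SL.E ξ < x := by
  rw [V, csInf_lt_iff ⟨0, SL.zero_mem_lowerBounds_V A⟩ ⟨1, fun _ => 1,
    fun ω => Set.indicator_apply_le' (fun _ => le_rfl) fun _ => zero_le_one, SL.const_eq 1⟩] at hx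
  obtain ⟨y, ⟨ξ, hξ, hy⟩, hyx⟩ := hx
  refine ⟨ξ, fun ω => (Set.indicator_nonneg (fun _ _ => zero_le_one) ω).trans (hξ ω),
    fun ω hω => ?_, hy ▸ EReal.coe_lt_coe_iff.mpr hyx⟩
  simpa only [Set.indicator_of_mem hω] using hξ ω

lemma V_le_one (A : Set Ω) : SL.V A ≤ 1 :=
  SL.V_le_of_E_le (fun _ => zero_le_one) (fun _ _ => le_rfl) (SL.const_eq 1).le

lemma V_empty : SL.V ∅ = 0 :=
  (SL.V_le_of_E_le (fun _ => le_rfl) (fun _ => False.elim) (SL.const_eq 0).le).antisymm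
    (SL.V_nonneg ∅)

lemma V_mono {A B : Set Ω} (hAB : A ⊆ B) : SL.V A ≤ SL.V B := by
  refine le_of_forall_gt_imp_ge_of_dense fun x hx => ?_
  obtain ⟨ξ, hξ, hB, hE⟩ := SL.exists_E_lt_of_V_lt hx
  exact SL.V_le_of_E_le hξ (fun ω hω => hB ω (hAB hω)) hE.le

lemma V_union_le (A B : Set Ω) : SL.V (A ∪ B) ≤ SL.V A + SL.V B := by
  refine le_of_forall_pos_le_add fun ε hε => ?_
  obtain ⟨ξ, hξ, hA, hEξ⟩ := SL.exists_E_lt_of_V_lt (lt_add_of_pos_right (SL.V A) (half_pos hε))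
  obtain ⟨η, hη, hB, hEη⟩ := SL.exists_E_lt_of_V_lt (lt_add_of_pos_right (SL.V B) (half_pos hε))
  have h_sum : SL.E (fun ω => ξ ω + η ω) ≤ ((SL.V A + ε / 2 + (SL.V B + ε / 2) : ℝ) : EReal) :=
    (SL.subadd ξ η).trans (add_le_add hEξ.le hEη.le)
  calc SL.V (A ∪ B) ≤ SL.V A + ε / 2 + (SL.V B + ε / 2) := by
        refine SL.V_le_of_E_le (fun ω => add_nonneg (hξ ω) (hη ω)) ?_ h_sum
        rintro ω (hω | hω)
        · exact le_add_of_le_of_nonneg (hA ω hω) (hη ω)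
        · exact le_add_of_nonneg_of_le (hξ ω) (hB ω hω)
    _ = SL.V A + SL.V B + ε := by ring

lemma V_biUnion_le {ι : Type*} (s : Finset ι) (A : ι → Set Ω) :
    SL.V (⋃ i ∈ s, A i) ≤ ∑ i ∈ s, SL.V (A i) := by
  classical
  induction s using Finset.induction_on with
  | empty => simp [V_empty]
  | insert i s hi ih =>
    rw [Finset.set_biUnion_insert, Finset.sum_insert hi]
    exact (SL.V_union_le _ _).trans (by gcongr)

end Capacity

section Choquet

variable (SL : SublinearExp Ω)

lemma measurable_V_ge (X : Ω → ℝ) :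
    Measurable fun t : ℝ => ENNReal.ofReal (SL.V {ω | t ≤ X ω}) :=
  Antitone.measurable fun _ _ hst =>
    ENNReal.ofReal_le_ofReal (SL.V_mono fun _ hω => hst.trans hω)

lemma Choquet_const_mul {a : ℝ} (ha : 0 < a) (X : Ω → ℝ) :
    SL.Choquet (fun ω => a * X ω) = ENNReal.ofReal a * SL.Choquet X := by
  unfold Choquet
  rw [lintegral_Ioi_eq_ofReal_mul_lintegral_comp_mul_left ha]
  simp only [mul_le_mul_iff_right₀ ha]

lemma Choquet_le_sum {ι : Type*} [Fintype ι] {Z : Ω → ℝ} {Y : ι → Ω → ℝ}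
    (hZ : ∀ ω, 0 < Z ω → ∃ i, Z ω ≤ Y i ω) : SL.Choquet Z ≤ ∑ i, SL.Choquet (Y i) := by
  unfold Choquet
  rw [← lintegral_finsetSum _ fun i _ => SL.measurable_V_ge (Y i)]
  refine setLIntegral_mono' measurableSet_Ioi fun t ht => ?_
  rw [← ENNReal.ofReal_sum_of_nonneg fun i _ => SL.V_nonneg _]
  have h_cover : {ω | t ≤ Z ω} ⊆ ⋃ i ∈ Finset.univ, {ω | t ≤ Y i ω} := by
    intro ω hω
    obtain ⟨i, hi⟩ := hZ ω (lt_of_lt_of_le ht hω)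
    exact Set.mem_biUnion (Finset.mem_coe.mpr (Finset.mem_univ i)) (hω.trans hi)
  exact ENNReal.ofReal_le_ofReal ((SL.V_mono h_cover).trans (SL.V_biUnion_le _ _))

lemma Choquet_iSup_rpow_le {ι : Type*} [Fintype ι] (X : ι → Ω → ℝ) {p : ℝ} (hp : p ≠ 0) :
    SL.Choquet (fun ω => (⨆ i, max (X i ω) 0) ^ p) ≤
      ∑ i, SL.Choquet fun ω => max (X i ω) 0 ^ p := by
  refine SL.Choquet_le_sum fun ω hω => ?_
  cases isEmpty_or_nonempty ι
  · rw [Real.iSup_of_isEmpty, Real.zero_rpow hp] at hω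
    exact absurd hω (lt_irrefl 0)
  · obtain ⟨i, hi⟩ := exists_eq_ciSup_of_finite (f := fun i => max (X i ω) 0)
    exact ⟨i, (congrArg (· ^ p) hi.symm).le⟩

lemma Choquet_le_add_lintegral_min_one {Y Z : Ω → ℝ} {f : ℝ → ℝ}
    (hf : ∀ t, 0 < t → SL.V {ω | t ≤ Y ω} ≤ SL.V {ω | t ≤ Z ω} + f t) :
    SL.Choquet Y ≤
      SL.Choquet Z + ∫⁻ t in Set.Ioi (0 : ℝ), ENNReal.ofReal (min 1 (f t)) := by
  unfold Choquet
  rw [← lintegral_add_left (SL.measurable_V_ge Z)]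
  refine setLIntegral_mono' measurableSet_Ioi fun t ht => ?_
  refine (ENNReal.ofReal_le_ofReal ?_).trans ENNReal.ofReal_add_le
  rw [← min_add_add_left]
  exact le_min (le_add_of_nonneg_of_le (SL.V_nonneg _) (SL.V_le_one _)) (hf t ht)

end Choquet

variable {SL : SublinearExp Ω} {K : ℝ} {n : ℕ} {X : Fin n → Ω → ℝ}

lemma E_exp_mul_min_le {Y : Ω → ℝ} {b : ℝ} (hmean : SL.E Y ≤ 0)
    (hb : SL.E (fun ω => Y ω ^ 2) ≤ b) {h y : ℝ} (hh : 0 < h) (hy : 0 < y) :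
    SL.E (fun ω => Real.exp (h * min (Y ω) y)) ≤ (Real.exp (bennettCoeff h y * b) : ℝ) := by
  set c : ℝ := bennettCoeff h y
  have hc : 0 ≤ c := bennettCoeff_nonneg h y
  calc SL.E (fun ω => Real.exp (h * min (Y ω) y))
      ≤ SL.E (fun ω => 1 + (h * Y ω + c * Y ω ^ 2)) :=
        SL.mono _ _ fun ω => exp_mul_min_le hh hy (Y ω)
    _ ≤ SL.E (fun _ => 1) + (SL.E (fun ω => h * Y ω) + SL.E (fun ω => c * Y ω ^ 2)) :=
        (SL.subadd (fun _ => 1) _).trans (by gcongr; exact SL.subadd _ _)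
    _ = 1 + (h * SL.E Y + c * SL.E (fun ω => Y ω ^ 2)) := by
        rw [SL.const_eq, SL.pos_homog h hh.le, SL.pos_homog c hc, EReal.coe_one]
    _ ≤ 1 + (0 + c * b) := by
        gcongr
        exact EReal.mul_nonpos_iff.mpr (Or.inl ⟨EReal.coe_nonneg.mpr hh.le, hmean⟩)
    _ = ((c * b + 1 : ℝ) : EReal) := by
        rw [zero_add, add_comm]
        norm_cast
    _ ≤ (Real.exp (c * b) : ℝ) := EReal.coe_le_coe_iff.mpr (Real.add_one_le_exp _)

namespace UENDFin

lemma one_le (hX : UENDFin SL K X) : 1 ≤ K := by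
  have h_one := hX (fun _ _ => 1) (fun _ => ⟨⟨0, LipschitzWith.const 1⟩, 1, by simp⟩)
    (fun _ => monotone_const) fun _ _ => zero_le_one
  simpa only [Finset.prod_const_one, SL.const_eq, EReal.toReal_coe, mul_one,
    EReal.coe_le_coe_iff] using h_one

variable {B : ℝ}

lemma E_prod_exp_mul_min_le (hX : UENDFin SL K X) (hmean : ∀ k, SL.E (X k) ≤ 0)
    (hB : ∑ k, SL.E (fun ω => X k ω ^ 2) ≤ B) {h y : ℝ} (hh : 0 < h) (hy : 0 < y) :
    SL.E (fun ω => ∏ k, Real.exp (h * min (X k ω) y)) ≤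
      ((K * Real.exp (bennettCoeff h y * B) : ℝ) : EReal) := by
  obtain ⟨b, hb, h_sum⟩ :=
    exists_real_eq_and_sum_le (fun k => SL.E_nonneg fun ω => sq_nonneg (X k ω)) hB
  have h_factor (k : Fin n) : (SL.E fun ω => Real.exp (h * min (X k ω) y)).toReal ≤
      Real.exp (bennettCoeff h y * b k) :=
    EReal.toReal_le_toReal (E_exp_mul_min_le (hmean k) (hb k).le hh hy) (SL.E_ne_bot _)
      (EReal.coe_ne_top _)
  have h_prod : ∏ k, (SL.E fun ω => Real.exp (h * min (X k ω) y)).toReal ≤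
      Real.exp (bennettCoeff h y * B) :=
    calc ∏ k, (SL.E fun ω => Real.exp (h * min (X k ω) y)).toReal
        ≤ ∏ k, Real.exp (bennettCoeff h y * b k) :=
          Finset.prod_le_prod (fun _ _ => EReal.toReal_nonneg
            (SL.E_nonneg fun _ => (Real.exp_pos _).le)) fun k _ => h_factor k
      _ = Real.exp (bennettCoeff h y * ∑ k, b k) := by rw [Finset.mul_sum, Real.exp_sum]
      _ ≤ Real.exp (bennettCoeff h y * B) :=
          Real.exp_le_exp.mpr (mul_le_mul_of_nonneg_left h_sum (bennettCoeff_nonneg h y))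
  have h_mono : Monotone fun u => Real.exp (h * min u y) := fun _ _ huv => by
    dsimp only
    gcongr
  exact (hX (fun _ u => Real.exp (h * min u y)) (fun _ => isBLip_exp_mul_min hh.le y)
    (fun _ => h_mono) fun _ _ => (Real.exp_pos _).le).trans
    (EReal.coe_le_coe_iff.mpr (mul_le_mul_of_nonneg_left h_prod (zero_le_one.trans hX.one_le)))

lemma V_sum_min_ge_le_exp (hX : UENDFin SL K X) (hmean : ∀ k, SL.E (X k) ≤ 0)
    (hB : ∑ k, SL.E (fun ω => X k ω ^ 2) ≤ B) {h y : ℝ} (hh : 0 < h) (hy : 0 < y) (x : ℝ) :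
    SL.V {ω | x ≤ ∑ k, min (X k ω) y} ≤
      K * Real.exp (-(h * x) + bennettCoeff h y * B) := by
  refine SL.V_le_of_E_le (ξ := fun ω => Real.exp (-(h * x)) * ∏ k, Real.exp (h * min (X k ω) y))
    (fun ω => by positivity) (fun ω hω => ?_) ?_
  · rw [← Real.exp_sum, ← Real.exp_add, ← Finset.mul_sum]
    have h_le : h * x ≤ h * ∑ k, min (X k ω) y := mul_le_mul_of_nonneg_left hω hh.le
    exact Real.one_le_exp (by linarith)
  · rw [SL.pos_homog _ (Real.exp_pos _).le, Real.exp_add, mul_left_comm, EReal.coe_mul]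
    exact mul_le_mul_of_nonneg_left (hX.E_prod_exp_mul_min_le hmean hB hh hy)
      (EReal.coe_nonneg.mpr (Real.exp_pos _).le)

variable {x y : ℝ}

lemma V_sum_min_ge_le_rpow_of_pos (hX : UENDFin SL K X) (hmean : ∀ k, SL.E (X k) ≤ 0)
    (hB : ∑ k, SL.E (fun ω => X k ω ^ 2) ≤ B) (hB_pos : 0 < B) (hx : 0 < x) (hy : 0 < y) :
    SL.V {ω | x ≤ ∑ k, min (X k ω) y} ≤ K * (Real.exp 1 * B / (x * y + B)) ^ (x / y) := by
  obtain ⟨h, hh, h_le⟩ := exists_exp_neg_mul_add_bennettCoeff_mul_le hx hy hB_pos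
  exact (hX.V_sum_min_ge_le_exp hmean hB hh hy x).trans
    (mul_le_mul_of_nonneg_left h_le (zero_le_one.trans hX.one_le))

lemma V_sum_min_ge_le_rpow (hX : UENDFin SL K X) (hmean : ∀ k, SL.E (X k) ≤ 0)
    (hB : ∑ k, SL.E (fun ω => X k ω ^ 2) ≤ B) (hx : 0 < x) (hy : 0 < y) :
    SL.V {ω | x ≤ ∑ k, min (X k ω) y} ≤ K * (Real.exp 1 * B / (x * y + B)) ^ (x / y) := by
  have hB_nonneg : 0 ≤ B := SL.nonneg_of_sum_E_sq_le hB
  have h_cont : ContinuousAt (fun B' => K * (Real.exp 1 * B' / (x * y + B')) ^ (x / y)) B := by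
    refine continuousAt_const.mul (ContinuousAt.rpow_const ?_ (Or.inr (by positivity)))
    exact ContinuousAt.div (by fun_prop) (by fun_prop) (by positivity)
  -- For `B = 0` the optimal `h` is infinite, so the bound is obtained as a limit.
  refine ge_of_tendsto (h_cont.tendsto.mono_left (nhdsWithin_le_nhds (s := Set.Ioi B))) ?_
  filter_upwards [self_mem_nhdsWithin] with B' hB'
  exact hX.V_sum_min_ge_le_rpow_of_pos hmean
    (hB.trans (EReal.coe_le_coe_iff.mpr (le_of_lt hB'))) (hB_nonneg.trans_lt hB') hx hy

lemma V_sum_ge_le (hX : UENDFin SL K X) (hmean : ∀ k, SL.E (X k) ≤ 0)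
    (hB : ∑ k, SL.E (fun ω => X k ω ^ 2) ≤ B) (hx : 0 < x) (hy : 0 < y) :
    SL.V {ω | x ≤ ∑ k, X k ω} ≤
      SL.V {ω | y ≤ ⨆ k, max (X k ω) 0} + K * (Real.exp 1 * B / (x * y + B)) ^ (x / y) := by
  have h_cover : {ω | x ≤ ∑ k, X k ω} ⊆
      {ω | y ≤ ⨆ k, max (X k ω) 0} ∪ {ω | x ≤ ∑ k, min (X k ω) y} := by
    intro ω hω
    by_cases h_large : ∃ k, y ≤ X k ω
    · obtain ⟨k, hk⟩ := h_large
      exact Or.inl ((hk.trans (le_max_left _ _)).trans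
        (le_ciSup (f := fun k => max (X k ω) 0) (Set.finite_range _).bddAbove k))
    · push Not at h_large
      have h_sum : ∑ k, min (X k ω) y = ∑ k, X k ω :=
        Finset.sum_congr rfl fun k _ => min_eq_left (h_large k).le
      exact Or.inr (hω.trans_eq h_sum.symm)
  exact (SL.V_mono h_cover).trans ((SL.V_union_le _ _).trans
    (add_le_add_right (hX.V_sum_min_ge_le_rpow hmean hB hx hy) _))

lemma V_sum_rpow_ge_le (hX : UENDFin SL K X) (hmean : ∀ k, SL.E (X k) ≤ 0)
    (hB : ∑ k, SL.E (fun ω => X k ω ^ 2) ≤ B) {p r t : ℝ} (hp : 0 < p) (hr : 0 < r)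
    (ht : 0 < t) :
    SL.V {ω | t ≤ max (∑ k, X k ω) 0 ^ p} ≤
      SL.V {ω | t ≤ r ^ p * (⨆ k, max (X k ω) 0) ^ p} +
        K * (Real.exp 1 * r) ^ r * (B ^ (p / 2) / t) ^ (2 * r / p) := by
  have hB_nonneg : 0 ≤ B := SL.nonneg_of_sum_E_sq_le hB
  have hK : 0 ≤ K := zero_le_one.trans hX.one_le
  set x : ℝ := t ^ p⁻¹
  have hx : 0 < x := Real.rpow_pos_of_pos ht _
  have h_sup (ω : Ω) : x / r ≤ (⨆ k, max (X k ω) 0) ↔ t ≤ r ^ p * (⨆ k, max (X k ω) 0) ^ p := by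
    have h_nonneg : 0 ≤ ⨆ k, max (X k ω) 0 := Real.iSup_nonneg fun k => le_max_right _ _
    rw [div_le_iff₀' hr, ← Real.mul_rpow hr.le h_nonneg,
      Real.rpow_inv_le_iff_of_pos ht.le (by positivity) hp]
  have h_rpow : (B / x ^ 2) ^ r = (B ^ (p / 2) / t) ^ (2 * r / p) := by
    have ht_eq : t = (x ^ 2) ^ (p / 2) := by
      rw [← Real.rpow_two, ← Real.rpow_mul hx.le, mul_div_cancel₀ p two_ne_zero,
        Real.rpow_inv_rpow ht.le hp.ne']
    rw [ht_eq, ← Real.div_rpow hB_nonneg (by positivity), ← Real.rpow_mul (by positivity)]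
    congr 1
    field_simp
  have h_tail : (Real.exp 1 * B / (x * (x / r) + B)) ^ (x / (x / r)) ≤
      (Real.exp 1 * r) ^ r * (B ^ (p / 2) / t) ^ (2 * r / p) := by
    rw [div_div_cancel₀ hx.ne', ← h_rpow, ← Real.mul_rpow (by positivity) (by positivity)]
    gcongr
    calc Real.exp 1 * B / (x * (x / r) + B) ≤ Real.exp 1 * B / (x * (x / r)) := by
          gcongr
          exact le_add_of_nonneg_right hB_nonneg
      _ = Real.exp 1 * r * (B / x ^ 2) := by field_simp
  simp only [le_max_zero_rpow_iff ht hp, ← h_sup, mul_assoc]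
  exact (hX.V_sum_ge_le hmean hB hx (div_pos hx hr)).trans (by gcongr)

theorem Choquet_sum_rpow_le (hX : UENDFin SL K X) (hmean : ∀ k, SL.E (X k) ≤ 0)
    (hB : ∑ k, SL.E (fun ω => X k ω ^ 2) ≤ B) {p r : ℝ} (hp : 0 < p) (hr : p / 2 < r) :
    SL.Choquet (fun ω => max (∑ k, X k ω) 0 ^ p) ≤
      ENNReal.ofReal (r ^ p) * SL.Choquet (fun ω => (⨆ k, max (X k ω) 0) ^ p) +
        ENNReal.ofReal ((1 + K * (Real.exp 1 * r) ^ r / (2 * r / p - 1)) * B ^ (p / 2)) := by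
  have hr_pos : 0 < r := (half_pos hp).trans hr
  have hq : 1 < 2 * r / p := by rw [one_lt_div hp]; linarith
  have hK : 0 ≤ K := zero_le_one.trans hX.one_le
  rw [← SL.Choquet_const_mul (Real.rpow_pos_of_pos hr_pos p)]
  refine (SL.Choquet_le_add_lintegral_min_one fun t ht =>
    hX.V_sum_rpow_ge_le hmean hB hp hr_pos ht).trans (add_le_add_right ?_ _)
  exact lintegral_min_one_mul_div_rpow_le (Real.rpow_nonneg (SL.nonneg_of_sum_E_sq_le hB) _)
    (by positivity) hq

end UENDFin

end SublinearExp

theorem stmt3_general (p : ℝ) (hp : 0 < p) (K : ℝ) :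
    ∃ C : ℝ,
      ∀ (Ω : Type) (SL : SublinearExp Ω) (n : ℕ) (X : Fin n → Ω → ℝ),
        SublinearExp.UENDFin SL K X →
        (∀ k, SL.E (X k) ≤ 0) →
        ∀ B : ℝ, (B : EReal) = (∑ k, SL.E fun ω => (X k ω) ^ 2) →
          SL.Choquet (fun ω => (max (∑ k, X k ω) 0) ^ p) ≤
              ENNReal.ofReal (p ^ p) *
                  SL.Choquet (fun ω => (⨆ k, max (X k ω) 0) ^ p) +
                ENNReal.ofReal (C * B ^ (p / 2)) ∧
          ENNReal.ofReal (p ^ p) *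
                SL.Choquet (fun ω => (⨆ k, max (X k ω) 0) ^ p) +
              ENNReal.ofReal (C * B ^ (p / 2)) ≤
            ENNReal.ofReal (p ^ p) *
                (∑ k, SL.Choquet fun ω => (max (X k ω) 0) ^ p) +
              ENNReal.ofReal (C * B ^ (p / 2)) := by
  refine ⟨1 + K * (Real.exp 1 * p) ^ p / (2 * p / p - 1),
    fun Ω SL n X hX hmean B hB => ⟨?_, ?_⟩⟩
  · exact hX.Choquet_sum_rpow_le hmean hB.ge hp (half_lt_self hp)
  · gcongr
    exact SL.Choquet_iSup_rpow_le X hp.ne'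

/-- Theorem 3.1(c), inequality (3.4): Choquet-integral moment inequalities;
the constant `C_p` depends only on `p` and `K`. -/
theorem stmt3 (p : ℝ) (hp : 2 ≤ p) (K : ℝ) (hK : 1 ≤ K) :
    ∃ C : ℝ,
      ∀ (Ω : Type) (SL : SublinearExp Ω) (n : ℕ) (X : Fin n → Ω → ℝ),
        SublinearExp.UENDFin SL K X →
        (∀ k, SL.E (X k) ≤ 0) →
        ∀ B : ℝ, (B : EReal) = (∑ k, SL.E fun ω => (X k ω) ^ 2) →
          SL.Choquet (fun ω => (max (∑ k, X k ω) 0) ^ p) ≤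
              ENNReal.ofReal (p ^ p) *
                  SL.Choquet (fun ω => (⨆ k, max (X k ω) 0) ^ p) +
                ENNReal.ofReal (C * B ^ (p / 2)) ∧
          ENNReal.ofReal (p ^ p) *
                SL.Choquet (fun ω => (⨆ k, max (X k ω) 0) ^ p) +
              ENNReal.ofReal (C * B ^ (p / 2)) ≤
            ENNReal.ofReal (p ^ p) *
                (∑ k, SL.Choquet fun ω => (max (X k ω) 0) ^ p) +
              ENNReal.ofReal (C * B ^ (p / 2)) :=
  stmt3_general p (by linarith) K
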